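/- arXiv:1609.04365 — 7 statements merged into one kernel-verified Lean document; each statement's English description precedes it below -/
import Mathlib

section
/- Let a and b be positive real numbers with b > 3a. Then for every T > 0 one has a/(1 − e^{−2aT}) + a < b/(1 − e^{−2bT}). -/
/-!
The function `t ↦ t / (1 - e^{-2tT})` is increasing on `t > 0`, because `(1 - e^{-2tT}) / t` is a
secant slope of a concave function; this reduces the claim to the endpoint `b = 3a`. There, with
`y = e^{-2aT} ∈ (0, 1)`, the inequality `1 / (1 - y) + 1 < 3 / (1 - y³)` is equivalent to
`0 < (1 - y)² (1 + y)`.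
-/

/-- Monotonicity of `t ↦ t / (1 - e^{-2tT})`, with denominators cleared; it is the convexity of
`exp` on the segment from `-2bT` to `0`. -/
lemma mul_one_sub_exp_le {b c : ℝ} (hc : 0 < c) (hcb : c < b) (T : ℝ) :
    c * (1 - Real.exp (-2 * b * T)) ≤ b * (1 - Real.exp (-2 * c * T)) := by
  have hb : 0 < b := hc.trans hcb
  have h := convexOn_exp.2 (Set.mem_univ (-2 * b * T)) (Set.mem_univ 0)
    (div_nonneg hc.le hb.le) (sub_nonneg.2 ((div_le_one hb).2 hcb.le)) (add_sub_cancel _ _)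
  have e : c / b * (-2 * b * T) = -2 * c * T := by field_simp
  simp only [smul_eq_mul, mul_zero, add_zero, Real.exp_zero, mul_one, e] at h
  have h2 := mul_le_mul_of_nonneg_left h hb.le
  have e2 : b * (c / b * Real.exp (-2 * b * T) + (1 - c / b))
      = c * Real.exp (-2 * b * T) + (b - c) := by field_simp
  linarith

/-- Let `a` and `b` be positive reals with `b > 3a`. Then for every `T > 0`,
`a/(1 - e^{-2aT}) + a < b/(1 - e^{-2bT})`. -/
theorem stmt_0 (a b : ℝ) (ha : 0 < a) (hb : 0 < b) (hab : b > 3 * a) :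
    ∀ T : ℝ, 0 < T →
      a / (1 - Real.exp (-2 * a * T)) + a < b / (1 - Real.exp (-2 * b * T)) := by
  intro T hT
  have hmono := mul_one_sub_exp_le (by positivity : 0 < 3 * a) hab T
  have hcube : Real.exp (-2 * (3 * a) * T) = Real.exp (-2 * a * T) ^ 3 := by
    rw [← Real.exp_nat_mul]
    congr 1
    push_cast
    ring
  have hz1 : Real.exp (-2 * b * T) < 1 := Real.exp_lt_one_iff.2 (by nlinarith [mul_pos hb hT])
  have hy1 : Real.exp (-2 * a * T) < 1 := Real.exp_lt_one_iff.2 (by nlinarith [mul_pos ha hT])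
  have hy0 := Real.exp_pos (-2 * a * T)
  rw [hcube] at hmono
  set y := Real.exp (-2 * a * T)
  set z := Real.exp (-2 * b * T)
  have hy : 0 < 1 - y := sub_pos.2 hy1
  have hz : 0 < 1 - z := sub_pos.2 hz1
  have hy3 : 0 < 1 - y ^ 3 := sub_pos.2 (pow_lt_one₀ hy0.le hy1 (by norm_num))
  calc a / (1 - y) + a < 3 * a / (1 - y ^ 3) := by
        rw [div_add' _ _ _ hy.ne', div_lt_div_iff₀ hy hy3]
        have : 0 < a * (1 - y) * ((1 - y) ^ 2 * (1 + y)) := by positivity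
        linear_combination this
    _ ≤ b / (1 - z) := (div_le_div_iff₀ hy3 hz).2 hmono
end

section
/- Let α₁, α_k, λ₁, λ_k be positive real numbers with λ_k ≤ λ₁ and α_k > 3α₁. Then for every T > 0, α₁/(λ₁²(1 − e^{−2α₁T})) + α₁/λ₁² < α_k/(λ_k²(1 − e^{−2α_kT})). -/
/-!
Write `x = e^{-2α₁T} ∈ (0, 1)`. The function `s ↦ s / (1 - e^{-s})` is strictly increasing on
`(0, ∞)`, so `αk > 3α₁` gives `αk / (1 - e^{-2αkT}) > 3α₁ / (1 - x³)`. The comparison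
`1 / (1 - x) + 1 ≤ 3 / (1 - x³)` is, after clearing denominators, `(2 - x)(1 + x + x²) ≤ 3`,
and the difference of the two sides is `(1 - x)²(1 + x) ≥ 0`. Finally `lamk ≤ lam₁` makes the
factor `1 / lamk²` at least `1 / lam₁²`.
-/

/-- Strict monotonicity of `s ↦ s / (1 - e^{-s})` on the positive reals, cross-multiplied. -/
lemma mul_one_sub_exp_neg_lt {u v : ℝ} (hu : 0 < u) (huv : u < v) :
    u * (1 - Real.exp (-v)) < v * (1 - Real.exp (-u)) := by
  have hz := Real.exp_pos (-u)
  -- Tangent line bound for `exp` at `-u`, evaluated at `-v`.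
  have h1 : Real.exp (-u) * (1 - (v - u)) ≤ Real.exp (-v) := by
    have h := Real.add_one_le_exp (-(v - u))
    have e : Real.exp (-v) = Real.exp (-u) * Real.exp (-(v - u)) := by
      rw [← Real.exp_add]; ring_nf
    rw [e]
    exact mul_le_mul_of_nonneg_left (by linarith) hz.le
  have h2 : Real.exp (-u) * (u + 1) < 1 := by
    have e : Real.exp (-u) * Real.exp u = 1 := by rw [← Real.exp_add]; simp
    exact (mul_lt_mul_of_pos_left (Real.add_one_lt_exp hu.ne') hz).trans_eq e
  have h3 := mul_le_mul_of_nonneg_left h1 hu.le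
  have h4 := mul_lt_mul_of_pos_left h2 (sub_pos.2 huv)
  nlinarith

/-- Let `α₁, α_k, λ₁, λ_k` be positive reals with `λ_k ≤ λ₁` and `α_k > 3α₁`.
Then for every `T > 0`,
`α₁/(λ₁²(1 - e^{-2α₁T})) + α₁/λ₁² < α_k/(λ_k²(1 - e^{-2α_kT}))`. -/
theorem stmt_3 (α₁ αk lam₁ lamk : ℝ)
    (hα₁ : 0 < α₁) (hαk : 0 < αk) (hlam₁ : 0 < lam₁) (hlamk : 0 < lamk)
    (hlam : lamk ≤ lam₁) (hgap : αk > 3 * α₁) :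
    ∀ T : ℝ, 0 < T →
      α₁ / (lam₁ ^ 2 * (1 - Real.exp (-2 * α₁ * T))) + α₁ / lam₁ ^ 2 <
        αk / (lamk ^ 2 * (1 - Real.exp (-2 * αk * T))) := by
  intro T hT
  have hmono := mul_one_sub_exp_neg_lt (u := 2 * (3 * α₁) * T) (v := 2 * αk * T)
    (by positivity) (by nlinarith)
  have ecube : Real.exp (-(2 * (3 * α₁) * T)) = Real.exp (-2 * α₁ * T) ^ 3 := by
    rw [← Real.exp_nat_mul]; push_cast; ring_nf
  have ek : Real.exp (-(2 * αk * T)) = Real.exp (-2 * αk * T) := by ring_nf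
  rw [ecube, ek] at hmono
  have hx0 := Real.exp_pos (-2 * α₁ * T)
  have hx1 : Real.exp (-2 * α₁ * T) < 1 := Real.exp_lt_one_iff.2 (by nlinarith [mul_pos hα₁ hT])
  have hy1 : Real.exp (-2 * αk * T) < 1 := Real.exp_lt_one_iff.2 (by nlinarith [mul_pos hαk hT])
  generalize Real.exp (-2 * α₁ * T) = x at *
  generalize Real.exp (-2 * αk * T) = y at *
  have hx : 0 < 1 - x := by linarith
  have hy : 0 < 1 - y := by linarith
  have hx3 : 0 < 1 - x ^ 3 := by nlinarith [mul_pos hx (by positivity : 0 < 1 + x + x ^ 2)]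
  have hlt : 3 * α₁ / (1 - x ^ 3) < αk / (1 - y) := by
    rw [div_lt_div_iff₀ hx3 hy]
    refine lt_of_mul_lt_mul_left ?_ (by positivity : 0 ≤ 2 * T)
    linarith
  have hle : α₁ / (1 - x) + α₁ ≤ 3 * α₁ / (1 - x ^ 3) := by
    rw [le_div_iff₀ hx3]
    have e : (α₁ / (1 - x) + α₁) * (1 - x ^ 3) = α₁ * ((2 - x) * (1 + x + x ^ 2)) := by
      field_simp; ring
    rw [e]
    have h : 0 ≤ (1 - x) ^ 2 * (1 + x) := by positivity
    nlinarith [mul_nonneg hα₁.le h]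
  calc α₁ / (lam₁ ^ 2 * (1 - x)) + α₁ / lam₁ ^ 2
      = (α₁ / (1 - x) + α₁) / lam₁ ^ 2 := by field_simp
    _ < αk / (1 - y) / lam₁ ^ 2 := by gcongr; exact hle.trans_lt hlt
    _ ≤ αk / (1 - y) / lamk ^ 2 := by gcongr
    _ = αk / (lamk ^ 2 * (1 - y)) := by field_simp
end

section
/- Let α, β be positive reals and 0 < λ < μ. Then the limit as T → 0⁺ of α/(λ²(1 − e^{−2αT})) + α/λ² − β/(μ²(1 − e^{−2βT})) is +∞. In particular, there exists T₁ > 0 such that for all 0 < T < T₁ one has β/(μ²(1 − e^{−2βT})) < α/(λ²(1 − e^{−2αT})) + α/λ². -/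
/-!
With `x = 2 a T`, the inequalities `x / (1 + x) ≤ 1 - e^{-x} ≤ x` (both instances of
`1 + y ≤ e^y`) give
`1 / (2 k² T) ≤ a / (k² (1 - e^{-2aT})) ≤ 1 / (2 k² T) + a / k²`.
So the leading singular term at `T = 0` does not depend on `a`, and the difference in the theorem
is at least `c / T` plus a constant, where `c = (1/λ² - 1/μ²) / 2 > 0` because `λ < μ`.
-/

open Filter

lemma one_sub_exp_pos {a T : ℝ} (ha : 0 < a) (hT : 0 < T) :
    0 < 1 - Real.exp (-2 * a * T) := by
  have : Real.exp (-2 * a * T) < 1 := Real.exp_lt_one_iff.2 (by nlinarith [mul_pos ha hT])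
  linarith

lemma le_div_one_sub_exp {a k T : ℝ} (ha : 0 < a) (hk : 0 < k) (hT : 0 < T) :
    1 / (2 * k ^ 2) * T⁻¹ ≤ a / (k ^ 2 * (1 - Real.exp (-2 * a * T))) := by
  have hp := one_sub_exp_pos ha hT
  have h := Real.add_one_le_exp (-2 * a * T)
  have e : 1 / (2 * k ^ 2) * T⁻¹ = a / (k ^ 2 * (2 * a * T)) := by
    field_simp
  rw [e]
  gcongr
  linarith

lemma div_one_sub_exp_le {a k T : ℝ} (ha : 0 < a) (hk : 0 < k) (hT : 0 < T) :
    a / (k ^ 2 * (1 - Real.exp (-2 * a * T))) ≤ 1 / (2 * k ^ 2) * T⁻¹ + a / k ^ 2 := by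
  have hx : 0 < 2 * a * T := by positivity
  have h : Real.exp (-2 * a * T) ≤ 1 / (1 + 2 * a * T) := by
    rw [show -2 * a * T = -(2 * a * T) by ring, Real.exp_neg, ← one_div]
    gcongr
    linarith [Real.add_one_le_exp (2 * a * T)]
  have h' : 2 * a * T / (1 + 2 * a * T) ≤ 1 - Real.exp (-2 * a * T) := by
    have : 2 * a * T / (1 + 2 * a * T) = 1 - 1 / (1 + 2 * a * T) := by
      field_simp
      ring
    linarith
  have e : 1 / (2 * k ^ 2) * T⁻¹ + a / k ^ 2 =
      a / (k ^ 2 * (2 * a * T / (1 + 2 * a * T))) := by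
    field_simp
  rw [e]
  gcongr

/-- Let `α, β > 0` and `0 < λ < μ`. Then
`α/(λ²(1 - e^{-2αT})) + α/λ² - β/(μ²(1 - e^{-2βT})) → +∞` as `T → 0⁺`;
in particular, there is `T₁ > 0` such that for all `0 < T < T₁`,
`β/(μ²(1 - e^{-2βT})) < α/(λ²(1 - e^{-2αT})) + α/λ²`. -/
theorem stmt_4 (α β lam mu : ℝ) (hα : 0 < α) (hβ : 0 < β)
    (hlam : 0 < lam) (hlm : lam < mu) :
    Tendsto
      (fun T : ℝ =>
        α / (lam ^ 2 * (1 - Real.exp (-2 * α * T))) + α / lam ^ 2 -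
          β / (mu ^ 2 * (1 - Real.exp (-2 * β * T))))
      (nhdsWithin 0 (Set.Ioi 0)) atTop ∧
    ∃ T₁ : ℝ, 0 < T₁ ∧ ∀ T : ℝ, 0 < T → T < T₁ →
      β / (mu ^ 2 * (1 - Real.exp (-2 * β * T))) <
        α / (lam ^ 2 * (1 - Real.exp (-2 * α * T))) + α / lam ^ 2 := by
  have hmu : 0 < mu := hlam.trans hlm
  have hc : 0 < 1 / (2 * lam ^ 2) - 1 / (2 * mu ^ 2) := by
    have : 1 / (2 * mu ^ 2) < 1 / (2 * lam ^ 2) := by gcongr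
    linarith
  have hlim : Tendsto
      (fun T : ℝ =>
        α / (lam ^ 2 * (1 - Real.exp (-2 * α * T))) + α / lam ^ 2 -
          β / (mu ^ 2 * (1 - Real.exp (-2 * β * T))))
      (nhdsWithin 0 (Set.Ioi 0)) atTop := by
    have hmain : Tendsto
        (fun T : ℝ => (1 / (2 * lam ^ 2) - 1 / (2 * mu ^ 2)) * T⁻¹ +
          (α / lam ^ 2 - β / mu ^ 2))
        (nhdsWithin 0 (Set.Ioi 0)) atTop :=
      tendsto_atTop_add_const_right _ _ (tendsto_inv_nhdsGT_zero.const_mul_atTop hc)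
    refine tendsto_atTop_mono' _ ?_ hmain
    filter_upwards [self_mem_nhdsWithin] with T hT
    have h1 := le_div_one_sub_exp hα hlam hT
    have h2 := div_one_sub_exp_le hβ hmu hT
    rw [sub_mul]
    linarith
  refine ⟨hlim, ?_⟩
  obtain ⟨T₁, hT₁, h⟩ :=
    mem_nhdsGT_iff_exists_Ioo_subset.1 (hlim.eventually_gt_atTop 0)
  exact ⟨T₁, hT₁, fun T h0 h1 => sub_pos.1 (h ⟨h0, h1⟩)⟩
end

section
/- Let 0 < α < β and 0 < λ < μ. Then the function T ↦ α/(λ²(1 − e^{−2αT})) + α/λ² − β/(μ²(1 − e^{−2βT})) is strictly decreasing on (0, ∞). -/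
/-!
Write `g_a(T) = a / (1 - e^{-2aT})`. Its derivative is `-(a / sinh (aT))² / 2`, so the derivative
of the function in question is `((β / (μ sinh (βT)))² - (α / (λ sinh (αT)))²) / 2`. Strict convexity
of `sinh` on the positive half-line makes `a ↦ a / sinh (aT)` strictly decreasing, and together with
`λ < μ` this makes the derivative negative.
-/

/-- Cleared form of the monotonicity of `a ↦ sinh (a * T) / a`: the difference of the two sides
vanishes at `T = 0` and has derivative `a * b * (cosh (b * T) - cosh (a * T)) > 0`. -/
lemma mul_sinh_lt_mul_sinh {a b T : ℝ} (ha : 0 < a) (hab : a < b) (hT : 0 < T) :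
    b * Real.sinh (a * T) < a * Real.sinh (b * T) := by
  have hb : 0 < b := ha.trans hab
  have hd : ∀ x : ℝ, HasDerivAt (fun x => a * Real.sinh (b * x) - b * Real.sinh (a * x))
      (a * b * (Real.cosh (b * x) - Real.cosh (a * x))) x := by
    intro x
    have h1 := ((hasDerivAt_id x).const_mul b).sinh.const_mul a
    have h2 := ((hasDerivAt_id x).const_mul a).sinh.const_mul b
    refine (h1.sub h2).congr_deriv ?_
    simp only [id]
    ring
  have hmono : StrictMonoOn (fun x => a * Real.sinh (b * x) - b * Real.sinh (a * x))
      (Set.Ici 0) := by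
    refine strictMonoOn_of_deriv_pos (convex_Ici 0)
      (fun x _ => (hd x).continuousAt.continuousWithinAt) fun x hx => ?_
    rw [interior_Ici, Set.mem_Ioi] at hx
    rw [(hd x).deriv]
    have : Real.cosh (a * x) < Real.cosh (b * x) := by
      rw [Real.cosh_lt_cosh, abs_of_pos (by positivity), abs_of_pos (by positivity)]
      gcongr
    have := sub_pos.2 this
    positivity
  have := hmono (Set.mem_Ici.2 le_rfl) (Set.mem_Ici.2 hT.le) hT
  simp only [mul_zero, Real.sinh_zero, sub_zero] at this
  linarith

lemma hasDerivAt_div_one_sub_exp {a c T : ℝ} (ha : 0 < a) (hc : 0 < c) (hT : 0 < T) :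
    HasDerivAt (fun T : ℝ => a / (c ^ 2 * (1 - Real.exp (-2 * a * T))))
      (-(a / (c * Real.sinh (a * T))) ^ 2 / 2) T := by
  have hs : 0 < Real.sinh (a * T) := Real.sinh_pos_iff.2 (by positivity)
  have hE := Real.exp_pos (-(a * T))
  have hone : Real.exp (a * T) * Real.exp (-(a * T)) = 1 := by
    rw [← Real.exp_add]; simp
  have hsq : Real.exp (-2 * a * T) = Real.exp (-(a * T)) ^ 2 := by
    rw [← Real.exp_nat_mul]; congr 1; push_cast; ring
  have hden : 1 - Real.exp (-2 * a * T) = 2 * Real.exp (-(a * T)) * Real.sinh (a * T) := by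
    rw [hsq, Real.sinh_eq]; linear_combination -hone
  have h1 := ((((hasDerivAt_id T).const_mul (-2 * a)).exp.const_sub 1).const_mul (c ^ 2))
  have hne : c ^ 2 * (1 - Real.exp (-2 * a * T)) ≠ 0 := by
    rw [hden]; positivity
  refine ((hasDerivAt_const T a).div h1 hne).congr_deriv ?_
  simp only [id]
  rw [hden, hsq]
  field_simp
  ring

/-- Let `0 < α < β` and `0 < λ < μ`. Then
`T ↦ α/(λ²(1 - e^{-2αT})) + α/λ² - β/(μ²(1 - e^{-2βT}))`
is strictly decreasing on `(0, ∞)`. -/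
theorem stmt_6 (α β lam mu : ℝ) (hα : 0 < α) (hαβ : α < β)
    (hlam : 0 < lam) (hlm : lam < mu) :
    StrictAntiOn
      (fun T : ℝ =>
        α / (lam ^ 2 * (1 - Real.exp (-2 * α * T))) + α / lam ^ 2 -
          β / (mu ^ 2 * (1 - Real.exp (-2 * β * T))))
      (Set.Ioi 0) := by
  have hβ : 0 < β := hα.trans hαβ
  have hmu : 0 < mu := hlam.trans hlm
  have hd := fun (x : ℝ) (hx : 0 < x) =>
    ((hasDerivAt_div_one_sub_exp hα hlam hx).add_const (α / lam ^ 2)).sub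
      (hasDerivAt_div_one_sub_exp hβ hmu hx)
  refine strictAntiOn_of_deriv_neg (convex_Ioi 0)
    (fun x hx => (hd x hx).continuousAt.continuousWithinAt) fun x hx => ?_
  rw [interior_Ioi, Set.mem_Ioi] at hx
  refine (hd x hx).deriv.trans_lt ?_
  have hsα : 0 < Real.sinh (α * x) := Real.sinh_pos_iff.2 (by positivity)
  have hsβ : 0 < Real.sinh (β * x) := Real.sinh_pos_iff.2 (by positivity)
  have key : β / (mu * Real.sinh (β * x)) < α / (lam * Real.sinh (α * x)) := by
    rw [div_lt_div_iff₀ (by positivity) (by positivity)]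
    calc β * (lam * Real.sinh (α * x)) = lam * (β * Real.sinh (α * x)) := by ring
      _ < mu * (α * Real.sinh (β * x)) := by
        gcongr ?_ * ?_
        exact mul_sinh_lt_mul_sinh hα hαβ hx
      _ = α * (mu * Real.sinh (β * x)) := by ring
  have := pow_lt_pow_left₀ key (by positivity) two_ne_zero
  linarith
end

section
/- Let (α_k)_{k≥1} be a nondecreasing sequence of positive reals and (λ_k)_{k≥1} a sequence of positive reals such that Σ_{k=1}^∞ λ_k²/α_k < ∞ and 2α₁/λ₁² < α_k/λ_k² for all k ≥ 2. Then there exists T₀ ∈ [0, ∞) such that for every T > T₀ and every k ≥ 2, φ₁(T) < φ_k(T), where φ₁(T) = α₁/(λ₁²(1 − e^{−2α₁T})) + α₁/λ₁² and φ_k(T) = α_k/(λ_k²(1 − e^{−2α_kT})). -/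
/-!
As `T → ∞`, the left side `φ₁(T)` tends to `2α₁/λ₁²`, while `φ_k(T) > α_k/λ_k²` for every `T > 0`
because `0 < 1 - exp (-2 α_k T) < 1`. It therefore suffices that `φ₁(T) < α_k/λ_k²` for all `k ≥ 2`
once `T` is large, uniformly in `k`. Summability gives `λ_k²/α_k → 0`, so all but finitely many `k`
satisfy `α_k/λ_k² > 3α₁/λ₁²`, a bound that `φ₁(T)` eventually stays below. Each of the finitely many
remaining `k` has its own threshold in `T`, by the strict gap `2α₁/λ₁² < α_k/λ_k²`.
-/

open Filter Topology in
theorem tendsto_phi_one {a l : ℝ} (ha : 0 < a) (hl : 0 < l) :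
    Tendsto (fun T : ℝ => a / (l ^ 2 * (1 - Real.exp (-2 * a * T))) + a / l ^ 2) atTop
      (𝓝 (2 * a / l ^ 2)) := by
  have hexp : Tendsto (fun T : ℝ => Real.exp (-2 * a * T)) atTop (𝓝 0) :=
    Real.tendsto_exp_atBot.comp (tendsto_id.const_mul_atTop_of_neg (by linarith))
  have hden : Tendsto (fun T : ℝ => l ^ 2 * (1 - Real.exp (-2 * a * T))) atTop
      (𝓝 (l ^ 2 * (1 - 0))) := (hexp.const_sub 1).const_mul _
  have hne : l ^ 2 * (1 - 0) ≠ 0 := by positivity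
  have h := ((tendsto_const_nhds (x := a)).div hden hne).add_const (a / l ^ 2)
  have hval : a / (l ^ 2 * (1 - 0)) + a / l ^ 2 = 2 * a / l ^ 2 := by ring
  exact hval ▸ h

theorem div_lt_phi {a l T : ℝ} (ha : 0 < a) (hl : 0 < l) (hT : 0 < T) :
    a / l ^ 2 < a / (l ^ 2 * (1 - Real.exp (-2 * a * T))) := by
  have h1 : Real.exp (-2 * a * T) < 1 := Real.exp_lt_one_iff.2 (by nlinarith [mul_pos ha hT])
  have h0 := Real.exp_pos (-2 * a * T)
  have hl2 : 0 < l ^ 2 := by positivity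
  exact div_lt_div_of_pos_left ha (mul_pos hl2 (by linarith)) (by nlinarith)

/-- Let `(α_k)_{k≥1}` be a nondecreasing sequence of positive reals and
`(λ_k)_{k≥1}` positive reals with `Σ λ_k²/α_k < ∞` and
`2α₁/λ₁² < α_k/λ_k²` for all `k ≥ 2`. Then there is `T₀ ∈ [0, ∞)` such that
for all `T > T₀` and all `k ≥ 2`, `φ₁(T) < φ_k(T)`. -/
theorem stmt_8 (α lam : ℕ → ℝ)
    (hαpos : ∀ k, 1 ≤ k → 0 < α k)
    (hlampos : ∀ k, 1 ≤ k → 0 < lam k)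
    (hmono : ∀ k, 1 ≤ k → α k ≤ α (k + 1))
    (hsum : Summable (fun k : ℕ => lam (k + 1) ^ 2 / α (k + 1)))
    (hgap : ∀ k, 2 ≤ k → 2 * α 1 / lam 1 ^ 2 < α k / lam k ^ 2) :
    ∃ T₀ : ℝ, 0 ≤ T₀ ∧ ∀ T : ℝ, T₀ < T → ∀ k, 2 ≤ k →
      α 1 / (lam 1 ^ 2 * (1 - Real.exp (-2 * α 1 * T))) + α 1 / lam 1 ^ 2 <
        α k / (lam k ^ 2 * (1 - Real.exp (-2 * α k * T))) := by
  have hα1 := hαpos 1 le_rfl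
  have hl1 := hlampos 1 le_rfl
  have hlim := tendsto_phi_one hα1 hl1
  have hc : 0 < α 1 / lam 1 ^ 2 := by positivity
  have htail : ∃ N : ℕ, ∀ k, N ≤ k → 2 ≤ k → 3 * (α 1 / lam 1 ^ 2) < α k / lam k ^ 2 := by
    have h0 := (Filter.tendsto_add_atTop_iff_nat (f := fun k : ℕ => lam k ^ 2 / α k) 1).1
      hsum.tendsto_atTop_zero
    have hpos : 0 < (3 * (α 1 / lam 1 ^ 2))⁻¹ := by positivity
    obtain ⟨N, hN⟩ := Filter.eventually_atTop.1 (h0.eventually_lt_const hpos)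
    refine ⟨N, fun k hk hk2 => ?_⟩
    have hα := hαpos k (by omega)
    have hl := hlampos k (by omega)
    have h := (lt_inv_comm₀ (by positivity) (by positivity)).1 (hN k hk)
    rwa [inv_div] at h
  obtain ⟨N, hN⟩ := htail
  have hfar := hlim.eventually_lt_const
    (show 2 * α 1 / lam 1 ^ 2 < 3 * (α 1 / lam 1 ^ 2) by rw [mul_div_assoc]; linarith)
  have hnear : ∀ᶠ T in Filter.atTop, ∀ k ∈ Finset.range N, 2 ≤ k →
      α 1 / (lam 1 ^ 2 * (1 - Real.exp (-2 * α 1 * T))) + α 1 / lam 1 ^ 2 < α k / lam k ^ 2 := by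
    rw [Filter.eventually_all_finset]
    intro k _
    by_cases hk : 2 ≤ k
    · filter_upwards [hlim.eventually_lt_const (hgap k hk)] with T hT _ using hT
    · exact Filter.Eventually.of_forall fun T h => absurd h hk
  obtain ⟨T₀, hT₀⟩ := Filter.eventually_atTop.1 (hfar.and hnear)
  refine ⟨max T₀ 0, le_max_right _ _, fun T hT k hk => ?_⟩
  obtain ⟨h1, h2⟩ := hT₀ T ((le_max_left _ _).trans hT.le)
  refine lt_trans ?_ (div_lt_phi (hαpos k (by omega)) (hlampos k (by omega))
    ((le_max_right _ _).trans_lt hT))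
  rcases lt_or_ge k N with h | h
  · exact h2 k (Finset.mem_range.2 h) hk
  · exact h1.trans (hN k h hk)
end

section
/- Let (α_k)_{k≥1} be a nondecreasing sequence of positive reals and (λ_k)_{k≥1} a sequence of positive reals such that Σ_{k=1}^∞ λ_k²/α_k < ∞ and 2α₁/λ₁² < α_k/λ_k² for all k ≥ 2. For each k ≥ 2 define T_k = sup{T > 0 : φ₁(T) ≥ φ_k(T)} (with T_k = 0 if this set is empty), where φ₁(T) = α₁/(λ₁²(1 − e^{−2α₁T})) + α₁/λ₁² and φ_k(T) = α_k/(λ_k²(1 − e^{−2α_kT})). Then every T_k is finite and T_k → 0 as k → ∞. -/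
/-!
Write `c = α₁ / λ₁²` and `r = α_k / λ_k²`. Since `0 < 1 - exp (-2 α_k T) < 1` for `T > 0`, one has
`r ≤ φ_k(T)`, so every `T` in the `k`-th crossing set satisfies `r ≤ c / (1 - exp (-2 α₁ T)) + c`.
When `2c < r` this can be solved for `T`, giving the explicit upper bound
`T ≤ -log (1 - c / (r - c)) / (2 α₁)` (`le_crossingBound`). Hence all the crossing sets are bounded.
Summability of `λ_k² / α_k` forces `r → ∞`, and the bound then tends to `0`.
-/

open Filter

/-- The solution `T` of `r = c / (1 - exp (-2 a T)) + c`, where `c` stands for `α₁ / λ₁²`, `a` for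
`α₁` and `r` for `α_k / λ_k²`. It is meaningful for `0 < c` and `2 * c < r`, where the logarithm has an
argument in `(0, 1)`. -/
noncomputable def crossingBound (a c r : ℝ) : ℝ :=
  -Real.log (1 - c / (r - c)) / (2 * a)

lemma crossingBound_nonneg {a c r : ℝ} (ha : 0 < a) (hc : 0 < c) (hr : 2 * c < r) :
    0 ≤ crossingBound a c r := by
  have hq : c / (r - c) < 1 := by
    rw [div_lt_one (by linarith)]
    linarith
  have hq0 : 0 < c / (r - c) := div_pos hc (by linarith)
  have hlog := Real.log_nonpos (x := 1 - c / (r - c)) (by linarith) (by linarith)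
  exact div_nonneg (by linarith) (by linarith)

/-- The cost `φ_k(T)`, with `α_k = b` and `λ_k² = l`, decreases to `b / l` as `T → ∞`, so it may be
replaced by that limit; the resulting inequality is then solved for `T`. -/
lemma le_crossingBound {a c b l T : ℝ} (ha : 0 < a) (hc : 0 < c) (hb : 0 < b) (hl : 0 < l)
    (hr : 2 * c < b / l) (hT : 0 < T)
    (h : b / (l * (1 - Real.exp (-2 * b * T))) ≤ c / (1 - Real.exp (-2 * a * T)) + c) :
    T ≤ crossingBound a c (b / l) := by
  have hexp_b : Real.exp (-2 * b * T) < 1 := by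
    rw [Real.exp_lt_one_iff]
    nlinarith [mul_pos hb hT]
  have hexp_a : Real.exp (-2 * a * T) < 1 := by
    rw [Real.exp_lt_one_iff]
    nlinarith [mul_pos ha hT]
  have hlim : b / l ≤ b / (l * (1 - Real.exp (-2 * b * T))) := by
    apply div_le_div_of_nonneg_left hb.le (mul_pos hl (by linarith))
    nlinarith [mul_pos hl (Real.exp_pos (-2 * b * T))]
  set r := b / l
  have hx : 0 < 1 - Real.exp (-2 * a * T) := by linarith
  have h1 : r - c ≤ c / (1 - Real.exp (-2 * a * T)) := by linarith
  have hrc : 0 < r - c := by linarith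
  rw [le_div_iff₀ hx] at h1
  have h2 : 1 - Real.exp (-2 * a * T) ≤ c / (r - c) := by
    rw [le_div_iff₀ hrc]
    linarith
  have hq : c / (r - c) < 1 := by
    rw [div_lt_one hrc]
    linarith
  have h3 := Real.log_le_log (x := 1 - c / (r - c)) (by linarith)
    (show 1 - c / (r - c) ≤ Real.exp (-2 * a * T) by linarith)
  rw [Real.log_exp] at h3
  rw [crossingBound, le_div_iff₀ (by linarith)]
  linarith

lemma tendsto_crossingBound (a c : ℝ) : Tendsto (crossingBound a c) atTop (nhds 0) := by
  have h1 : Tendsto (fun r : ℝ => c / (r - c)) atTop (nhds 0) :=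
    (tendsto_atTop_add_const_right atTop (-c) tendsto_id).const_div_atTop c
  have h2 : Tendsto (fun r : ℝ => 1 - c / (r - c)) atTop (nhds 1) := by
    simpa using h1.const_sub 1
  have h3 := ((h2.log one_ne_zero).neg).div_const (2 * a)
  rw [Real.log_one, neg_zero, zero_div] at h3
  exact h3

/-- A sequence of positive terms `l k / b k` (`k ≥ 1`) with convergent sum has reciprocals `b k / l k`
tending to infinity. -/
lemma tendsto_ratio_atTop {b l : ℕ → ℝ} (hb : ∀ k, 1 ≤ k → 0 < b k) (hl : ∀ k, 1 ≤ k → 0 < l k)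
    (hsum : Summable (fun k : ℕ => l (k + 1) / b (k + 1))) :
    Tendsto (fun k => b k / l k) atTop atTop := by
  rw [← tendsto_add_atTop_iff_nat 1]
  have h : Tendsto (fun k : ℕ => l (k + 1) / b (k + 1)) atTop (nhdsWithin 0 (Set.Ioi 0)) :=
    tendsto_nhdsWithin_iff.2 ⟨hsum.tendsto_atTop_zero, Eventually.of_forall fun k =>
      div_pos (hl _ (by omega)) (hb _ (by omega))⟩
  exact h.inv_tendsto_nhdsGT_zero.congr fun k => inv_div _ _

/-- Under Assumptions 1.1 and 3.7, the crossing times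
`T_k = sup {T > 0 : φ₁(T) ≥ φ_k(T)}` (with `T_k = 0` if the set is empty)
are all finite (the sets are bounded above) and `T_k → 0` as `k → ∞`. -/
theorem stmt_9 (α lam : ℕ → ℝ)
    (hαpos : ∀ k, 1 ≤ k → 0 < α k)
    (hlampos : ∀ k, 1 ≤ k → 0 < lam k)
    (hmono : ∀ k, 1 ≤ k → α k ≤ α (k + 1))
    (hsum : Summable (fun k : ℕ => lam (k + 1) ^ 2 / α (k + 1)))
    (hgap : ∀ k, 2 ≤ k → 2 * α 1 / lam 1 ^ 2 < α k / lam k ^ 2) :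
    (∀ k, 2 ≤ k → BddAbove {T : ℝ | 0 < T ∧
      α 1 / (lam 1 ^ 2 * (1 - Real.exp (-2 * α 1 * T))) + α 1 / lam 1 ^ 2 ≥
        α k / (lam k ^ 2 * (1 - Real.exp (-2 * α k * T)))}) ∧
    Tendsto
      (fun k : ℕ => sSup {T : ℝ | 0 < T ∧
        α 1 / (lam 1 ^ 2 * (1 - Real.exp (-2 * α 1 * T))) + α 1 / lam 1 ^ 2 ≥
          α k / (lam k ^ 2 * (1 - Real.exp (-2 * α k * T)))})
      atTop (nhds 0) := by
  have hα : 0 < α 1 := hαpos 1 le_rfl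
  have hc : 0 < α 1 / lam 1 ^ 2 := div_pos hα (pow_pos (hlampos 1 le_rfl) 2)
  have hgap' : ∀ k, 2 ≤ k → 2 * (α 1 / lam 1 ^ 2) < α k / lam k ^ 2 := fun k hk => by
    rw [← mul_div_assoc]
    exact hgap k hk
  have hbound : ∀ k, 2 ≤ k → ∀ T ∈ {T : ℝ | 0 < T ∧
      α 1 / (lam 1 ^ 2 * (1 - Real.exp (-2 * α 1 * T))) + α 1 / lam 1 ^ 2 ≥
        α k / (lam k ^ 2 * (1 - Real.exp (-2 * α k * T)))},
      T ≤ crossingBound (α 1) (α 1 / lam 1 ^ 2) (α k / lam k ^ 2) := by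
    rintro k hk T ⟨hT, h⟩
    refine le_crossingBound hα hc (hαpos k (by omega)) (pow_pos (hlampos k (by omega)) 2)
      (hgap' k hk) hT ?_
    rw [div_div]
    exact h
  refine ⟨fun k hk => ⟨_, hbound k hk⟩, ?_⟩
  have hlim := (tendsto_crossingBound (α 1) (α 1 / lam 1 ^ 2)).comp
    (tendsto_ratio_atTop hαpos (fun k hk => pow_pos (hlampos k hk) 2) hsum)
  refine tendsto_of_tendsto_of_tendsto_of_le_of_le' tendsto_const_nhds hlim
    (Eventually.of_forall fun k => Real.sSup_nonneg fun T hT => hT.1.le) ?_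
  filter_upwards [eventually_ge_atTop 2] with k hk
  exact Real.sSup_le (hbound k hk) (crossingBound_nonneg hα hc (hgap' k hk))
end

section
/- Let α, λ, T > 0 and z ∈ ℝ, and define y*(t) = z (e^{−α(T−t)} − e^{−α(t+T)})/(1 − e^{−2αT}) for t ∈ [0, T]. Then y*(0) = 0, y*(T) = z, and (1/(2λ²)) ∫₀ᵀ (y*′(t) + α y*(t))² dt = α z²/(λ²(1 − e^{−2αT})). -/
/-!
Write `D = 1 - e^{-2αT} > 0`. In `y*' + α y*` the terms in `e^{-α(t+T)}` cancel, because they solve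
the homogeneous equation `y' = -α y`, and what remains is the single exponential
`2αz e^{-α(T-t)} / D`. Its square has the antiderivative `2αz² e^{-2α(T-t)} / D²`, whose increment
over `[0, T]` is `2αz² / D`, and dividing by `2λ²` gives the claimed energy.
-/

/-- The explicit minimizer `y*(t) = z(e^{-α(T-t)} - e^{-α(t+T)})/(1 - e^{-2αT})`
satisfies `y*(0) = 0`, `y*(T) = z`, and attains the minimal control energy
`(1/(2λ²)) ∫₀ᵀ (y*'(t) + α y*(t))² dt = α z²/(λ²(1 - e^{-2αT}))`. -/
theorem stmt_11 (α lam T z : ℝ) (hα : 0 < α) (hlam : 0 < lam) (hT : 0 < T) :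
    let ystar : ℝ → ℝ := fun t =>
      z * (Real.exp (-α * (T - t)) - Real.exp (-α * (t + T))) /
        (1 - Real.exp (-2 * α * T))
    ystar 0 = 0 ∧ ystar T = z ∧
      (1 / (2 * lam ^ 2)) *
          ∫ t in (0 : ℝ)..T, (deriv ystar t + α * ystar t) ^ 2 =
        α * z ^ 2 / (lam ^ 2 * (1 - Real.exp (-2 * α * T))) := by
  intro ystar
  have hD : 0 < 1 - Real.exp (-2 * α * T) := by
    have h : Real.exp (-2 * α * T) < 1 := by
      rw [Real.exp_lt_one_iff]
      nlinarith [mul_pos hα hT]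
    linarith
  have hderiv (t : ℝ) : HasDerivAt ystar
      (z * (Real.exp (-α * (T - t)) * α - Real.exp (-α * (t + T)) * (-α)) /
        (1 - Real.exp (-2 * α * T))) t := by
    have h₁ : HasDerivAt (fun t : ℝ => -α * (T - t)) α t := by
      simpa using ((hasDerivAt_id t).const_sub T).const_mul (-α)
    have h₂ : HasDerivAt (fun t : ℝ => -α * (t + T)) (-α) t := by
      simpa using ((hasDerivAt_id t).add_const T).const_mul (-α)
    exact ((h₁.exp.sub h₂.exp).const_mul z).div_const _
  have hcontrol (t : ℝ) : deriv ystar t + α * ystar t =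
      2 * α * z * Real.exp (-α * (T - t)) / (1 - Real.exp (-2 * α * T)) := by
    rw [(hderiv t).deriv]
    simp only [ystar]
    ring
  have hprim (t : ℝ) : HasDerivAt
      (fun t : ℝ => 2 * α * z ^ 2 / (1 - Real.exp (-2 * α * T)) ^ 2 *
        Real.exp (-2 * α * (T - t)))
      ((deriv ystar t + α * ystar t) ^ 2) t := by
    have h₁ : HasDerivAt (fun t : ℝ => -2 * α * (T - t)) (2 * α) t := by
      simpa using ((hasDerivAt_id t).const_sub T).const_mul (-2 * α)
    have hsq : Real.exp (-2 * α * (T - t)) = Real.exp (-α * (T - t)) ^ 2 := by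
      rw [← Real.exp_nat_mul]
      congr 1
      push_cast
      ring
    refine (h₁.exp.const_mul (2 * α * z ^ 2 / (1 - Real.exp (-2 * α * T)) ^ 2)).congr_deriv ?_
    rw [hcontrol, hsq]
    -- `ring` would expand the square of the denominator, so the denominator is made atomic.
    generalize 1 - Real.exp (-2 * α * T) = D
    ring
  refine ⟨by simp [ystar], ?_, ?_⟩
  · have h : -α * (T + T) = -2 * α * T := by ring
    simp only [ystar, sub_self, mul_zero, Real.exp_zero, h]
    exact mul_div_cancel_right₀ z hD.ne'
  · have hint : IntervalIntegrable (fun t => (deriv ystar t + α * ystar t) ^ 2)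
        MeasureTheory.volume 0 T := by
      simp only [hcontrol]
      exact Continuous.intervalIntegrable (by fun_prop) _ _
    rw [intervalIntegral.integral_eq_sub_of_hasDerivAt (fun t _ => hprim t) hint]
    simp only [sub_self, mul_zero, Real.exp_zero, sub_zero]
    have hD' := hD.ne'
    -- Only `D ≠ 0` matters from here on, so the exponential is treated as an indeterminate.
    generalize Real.exp (-2 * α * T) = E at hD' ⊢
    field_simp
end
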